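/- arXiv:1012.2793 — 2 statements merged into one kernel-verified Lean document; each statement's English description precedes it below -/
import Mathlib

section
/- For every prime p ≥ 5, every non-trivial finite-dimensional complex linear representation of SL₂(𝔽_p) has dimension at least (p−1)/2. -/
/-!
Restrict the representation to the unipotent subgroup of all `transvection b`, a copy of the
additive group of the field. The conjugates of this subgroup generate `SL₂`, so it acts
nontrivially, and after extending scalars to an algebraic closure some nontrivial additive
character `χ` occurs in it. Since `diag(a, a⁻¹)` conjugates `transvection b` to
`transvection (a² * b)`, every character `b ↦ χ (a² * b)` occurs as well. These are distinct for
distinct squares `a²`, of which a field of order `q` has at least `(q - 1) / 2` nonzero ones, and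
eigenvectors of distinct characters are linearly independent.
-/

open Module Matrix.SpecialLinearGroup
open scoped MatrixGroups commutatorElement

section WeightSpace

variable {A K V : Type*} [CommRing K] [AddCommGroup V] [Module K V]

/-- The simultaneous eigenspace of weight `χ` of an additive monoid `A` acting on the module `V`.
The action is encoded as an `AddChar`, that is, a monoid homomorphism out of `Multiplicative A`. -/
def weightSpace [AddMonoid A] (τ : AddChar A (End K V)) (χ : AddChar A K) : Submodule K V :=
  ⨅ a, (τ a).eigenspace (χ a)

lemma mem_weightSpace_iff [AddMonoid A] {τ : AddChar A (End K V)} {χ : AddChar A K} {v : V} :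
    v ∈ weightSpace τ χ ↔ ∀ a, τ a v = χ a • v := by
  simp [weightSpace]

lemma map_weightSpace_le_weightSpace_mulShift [CommRing A] {τ : AddChar A (End K V)}
    {D : End K V} {c : A} (hD : ∀ b, τ b * D = D * τ (c * b)) (χ : AddChar A K) :
    (weightSpace τ χ).map D ≤ weightSpace τ (χ.mulShift c) := by
  rintro _ ⟨v, hv, rfl⟩
  rw [mem_weightSpace_iff]
  intro b
  calc τ b (D v) = D (τ (c * b) v) := LinearMap.congr_fun (hD b) v
    _ = χ.mulShift c b • D v := by
      rw [mem_weightSpace_iff.mp hv, map_smul, AddChar.mulShift_apply]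

lemma commute_addChar_apply [AddCommMonoid A] {M : Type*} [Monoid M] (τ : AddChar A M) (a b : A) :
    Commute (τ a) (τ b) :=
  (Commute.all (Multiplicative.ofAdd a) (Multiplicative.ofAdd b)).map τ.toMonoidHom

lemma iSupIndep_weightSpace [AddCommMonoid A] [IsDomain K] [IsTorsionFree K V]
    (τ : AddChar A (End K V)) : iSupIndep (weightSpace τ) := by
  have hindep : iSupIndep fun χ : A → K ↦ ⨅ a, (τ a).maxGenEigenspace (χ a) :=
    End.independent_iInf_maxGenEigenspace_of_forall_mapsTo τ fun a b ↦
      End.mapsTo_maxGenEigenspace_of_comm (commute_addChar_apply τ b a)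
  exact (hindep.comp DFunLike.coe_injective).mono fun χ ↦ iInf_mono fun a ↦
    (End.genEigenspace (τ a) (χ a)).mono le_top

lemma exists_addChar_coe_eq [AddMonoid A] [IsDomain K] [IsTorsionFree K V]
    {τ : AddChar A (End K V)} {f : A → K} {v : V} (hv : v ≠ 0) (hf : ∀ a, τ a v = f a • v) :
    ∃ χ : AddChar A K, ⇑χ = f := by
  refine ⟨⟨f, ?_, fun a b ↦ ?_⟩, rfl⟩ <;> refine smul_left_injective K hv ?_
  · simp [← hf]
  · calc f (a + b) • v = τ a (τ b v) := by rw [← hf, τ.map_add_eq_mul, End.mul_apply]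
      _ = (f a * f b) • v := by rw [hf b, map_smul, hf a, smul_smul, mul_comm]

end WeightSpace

lemma isSemisimple_of_pow_eq_one {K V : Type*} [Field K] [AddCommGroup V] [Module K V]
    {T : End K V} {n : ℕ} (hn : (n : K) ≠ 0) (hT : T ^ n = 1) : T.IsSemisimple :=
  End.isSemisimple_of_squarefree_aeval_eq_zero
    (Polynomial.X_pow_sub_one_separable_iff.mpr hn).squarefree (by simp [hT])

section Diagonalization

variable {A K V : Type*} [AddCommGroup A] [Field K] [IsAlgClosed K] [AddCommGroup V] [Module K V]
  [FiniteDimensional K V]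

lemma iSup_weightSpace_eq_top (hA : (Nat.card A : K) ≠ 0) (τ : AddChar A (End K V)) :
    ⨆ χ, weightSpace τ χ = ⊤ := by
  have hpow (a : A) : τ a ^ Nat.card A = 1 := by
    rw [← τ.map_nsmul_eq_pow, card_nsmul_eq_zero', τ.map_zero_eq_one]
  have hmax (a : A) (μ : K) : (τ a).maxGenEigenspace μ = (τ a).eigenspace μ :=
    (isSemisimple_of_pow_eq_one hA (hpow a)).isFinitelySemisimple.maxGenEigenspace_eq_eigenspace μ
  have htop : ⨆ f : A → K, ⨅ a, (τ a).eigenspace (f a) = ⊤ := by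
    simpa only [hmax] using
      End.iSup_iInf_maxGenEigenspace_eq_top_of_iSup_maxGenEigenspace_eq_top_of_commute τ
        (fun a b _ ↦ commute_addChar_apply τ a b) fun a ↦ End.iSup_maxGenEigenspace_eq_top (τ a)
  refine top_le_iff.mp (htop.ge.trans (iSup_le fun f v hv ↦ ?_))
  obtain rfl | hv0 := eq_or_ne v 0
  · exact zero_mem _
  obtain ⟨χ, rfl⟩ := exists_addChar_coe_eq (τ := τ) (f := f) hv0 (by simpa using hv)
  exact Submodule.mem_iSup_of_mem χ hv

lemma exists_ne_one_weightSpace_ne_bot (hA : (Nat.card A : K) ≠ 0) {τ : AddChar A (End K V)}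
    (hτ : τ ≠ 1) : ∃ χ : AddChar A K, χ ≠ 1 ∧ weightSpace τ χ ≠ ⊥ := by
  contrapose! hτ
  have htriv : weightSpace τ 1 = ⊤ := by
    rw [← top_le_iff, ← iSup_weightSpace_eq_top hA τ]
    refine iSup_le fun χ ↦ ?_
    obtain rfl | hχ := eq_or_ne χ 1
    · exact le_rfl
    · simp [hτ χ hχ]
  ext a v
  have hv : v ∈ weightSpace τ 1 := htriv ▸ Submodule.mem_top
  simpa using mem_weightSpace_iff.mp hv a

end Diagonalization

lemma card_units_le_mul_card_powMonoidHom_range (R : Type*) [CommRing R] [IsDomain R] (n : ℕ)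
    [NeZero n] : Nat.card Rˣ ≤ n * Nat.card (powMonoidHom n : Rˣ →* Rˣ).range := by
  rw [← Subgroup.index_ker, ← Subgroup.card_mul_index (powMonoidHom n : Rˣ →* Rˣ).ker]
  exact Nat.mul_le_mul_right _ (card_rootsOfUnity R n)

section SL2

lemma isConj_transvection_neg {R : Type*} [CommRing R] (c : R) :
    IsConj (transvection zero_ne_one (-c) : SL(2, R)) (transvection one_ne_zero c) := by
  obtain ⟨w, hw⟩ : ∃ w : SL(2, R), w.val = !![0, -1; 1, 0] := ⟨⟨_, by simp⟩, rfl⟩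
  refine isConj_iff.mpr ⟨w, mul_inv_eq_of_eq_mul ?_⟩
  ext i j
  fin_cases i <;> fin_cases j <;> simp [hw, transvection_coe, Matrix.mul_apply]

variable {F : Type*} [Field F]

lemma monoidHom_eq_one_of_forall_transvection {M : Type*} [Monoid M] {f : SL(2, F) →* M}
    (hf : ∀ c, f (transvection zero_ne_one c) = 1) : f = 1 := by
  ext g
  induction g using Matrix.SL2.transvection_induction with
  | hmul A B hA hB => rw [map_mul, hA, hB, map_mul]
  | htransvec i j hij c =>
    fin_cases i <;> fin_cases j
    · exact absurd rfl hij
    · exact hf c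
    · exact isConj_one_right.mp (hf (-c) ▸ f.map_isConj (isConj_transvection_neg c))
    · exact absurd rfl hij

lemma transvection_mul_inv_diag2 {a : F} (ha : a ≠ 0) (b : F) :
    transvection zero_ne_one b * (diag2 a ha)⁻¹ =
      (diag2 a ha)⁻¹ * transvection zero_ne_one (a ^ 2 * b) := by
  rw [eq_inv_mul_iff_mul_eq, ← mul_assoc]
  calc diag2 a ha * transvection zero_ne_one b * (diag2 a ha)⁻¹
      = ⁅diag2 a ha, transvection zero_ne_one b⁆ * transvection zero_ne_one b := by
        rw [commutatorElement_def, inv_mul_cancel_right]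
    _ = transvection zero_ne_one (a ^ 2 * b) := by
        rw [Matrix.commutator_diag2_transvection a ha b _ rfl, ← transvection_add]
        ring_nf

/-- The action of the additive group of `R` on a representation of `SL₂(R)` through the upper
unipotent subgroup. -/
def unipotentAction {R K V : Type*} [CommRing R] [CommRing K] [AddCommGroup V] [Module K V]
    (ρ : Representation K SL(2, R) V) : AddChar R (End K V) where
  toFun b := ρ (transvection zero_ne_one b)
  map_zero_eq_one' := by rw [transvection_coeff_zero, map_one]
  map_add_eq_mul' a b := by rw [transvection_add, map_mul]

lemma unipotentAction_apply {R K V : Type*} [CommRing R] [CommRing K] [AddCommGroup V] [Module K V]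
    (ρ : Representation K SL(2, R) V) (b : R) :
    unipotentAction ρ b = ρ (transvection zero_ne_one b) :=
  rfl

lemma unipotentAction_ne_one {K V : Type*} [CommRing K] [AddCommGroup V] [Module K V]
    {ρ : Representation K SL(2, F) V} (hρ : ρ ≠ 1) : unipotentAction ρ ≠ 1 :=
  fun h ↦ hρ (monoidHom_eq_one_of_forall_transvection fun c ↦ DFunLike.congr_fun h c)

lemma weightSpace_unipotentAction_mulShift_sq_ne_bot {K V : Type*} [CommRing K] [AddCommGroup V]
    [Module K V] {ρ : Representation K SL(2, F) V} {χ : AddChar F K}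
    (hχ : weightSpace (unipotentAction ρ) χ ≠ ⊥) {a : F} (ha : a ≠ 0) :
    weightSpace (unipotentAction ρ) (χ.mulShift (a ^ 2)) ≠ ⊥ := by
  have hD (b : F) : unipotentAction ρ b * ρ (diag2 a ha)⁻¹ =
      ρ (diag2 a ha)⁻¹ * unipotentAction ρ (a ^ 2 * b) := by
    simp only [unipotentAction_apply, ← map_mul, transvection_mul_inv_diag2]
  have hmap := map_weightSpace_le_weightSpace_mulShift hD χ
  contrapose! hχ
  rw [hχ, Submodule.map_le_iff_le_comap, Submodule.comap_bot] at hmap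
  have hinj : LinearMap.ker (ρ (diag2 a ha)⁻¹) = ⊥ :=
    LinearMap.ker_eq_bot.mpr (ρ.apply_bijective _).injective
  exact le_bot_iff.mp (hinj ▸ hmap)

lemma card_units_le_two_mul_finrank_of_isAlgClosed {K V : Type*} [Field K] [IsAlgClosed K]
    [AddCommGroup V] [Module K V] [FiniteDimensional K V] (hF : (Nat.card F : K) ≠ 0)
    {ρ : Representation K SL(2, F) V} (hρ : ρ ≠ 1) : Nat.card Fˣ ≤ 2 * finrank K V := by
  obtain ⟨χ, hχ1, hχ⟩ := exists_ne_one_weightSpace_ne_bot hF (unipotentAction_ne_one hρ)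
  let squares := (powMonoidHom 2 : Fˣ →* Fˣ).range
  let shift (s : squares) : {χ // weightSpace (unipotentAction ρ) χ ≠ ⊥} :=
    ⟨χ.mulShift (s : Fˣ), by
      obtain ⟨_, a, rfl⟩ := s
      simpa using weightSpace_unipotentAction_mulShift_sq_ne_bot hχ a.ne_zero⟩
  have hshift : Function.Injective shift := fun s t hst ↦ Subtype.ext <| Units.ext <|
    AddChar.to_mulShift_inj_of_isPrimitive (.of_ne_one hχ1) (congrArg Subtype.val hst)
  have hindep := iSupIndep_weightSpace (unipotentAction ρ)
  have := hindep.fintypeNeBotOfFiniteDimensional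
  calc Nat.card Fˣ ≤ 2 * Nat.card squares := card_units_le_mul_card_powMonoidHom_range F 2
    _ ≤ 2 * Fintype.card {χ // weightSpace (unipotentAction ρ) χ ≠ ⊥} := by
      rw [← Nat.card_eq_fintype_card]
      exact Nat.mul_le_mul_left 2 (Nat.card_le_card_of_injective shift hshift)
    _ ≤ 2 * finrank K V := Nat.mul_le_mul_left 2 hindep.subtype_ne_bot_le_finrank

lemma card_units_le_two_mul_finrank {K V : Type*} [Field K] [AddCommGroup V] [Module K V]
    [FiniteDimensional K V] (hF : (Nat.card F : K) ≠ 0)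
    {ρ : Representation K SL(2, F) V} (hρ : ρ ≠ 1) : Nat.card Fˣ ≤ 2 * finrank K V := by
  let L := AlgebraicClosure K
  let extend : End K V →* End L (TensorProduct K L V) := End.baseChangeHom K L V
  have hinj : Function.Injective extend := LinearMap.baseChangeHom_injective K V L
  have hρL : extend.comp ρ ≠ 1 := fun h ↦ hρ <| MonoidHom.ext fun g ↦ hinj <| by
    simpa using DFunLike.congr_fun h g
  have hFL : (Nat.card F : L) ≠ 0 := by
    rw [← map_natCast (algebraMap K L)]
    exact (map_ne_zero _).mpr hF
  rw [← finrank_baseChange (R := L)]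
  exact card_units_le_two_mul_finrank_of_isAlgClosed hFL hρL

end SL2

theorem stmt6_general {F K V : Type*} [Field F] [Field K] (hF : (Nat.card F : K) ≠ 0)
    [AddCommGroup V] [Module K V] [FiniteDimensional K V] (ρ : Representation K SL(2, F) V)
    (hρ : ∃ g, ρ g ≠ LinearMap.id) : ((Nat.card F : ℝ) - 1) / 2 ≤ finrank K V := by
  have hρ1 : ρ ≠ 1 := fun h ↦ hρ.elim fun g hg ↦ hg (DFunLike.congr_fun h g)
  have hle := card_units_le_two_mul_finrank hF hρ1
  rw [Nat.card_units, Nat.sub_le_iff_le_add] at hle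
  rw [div_le_iff₀' two_pos, sub_le_iff_le_add]
  exact_mod_cast hle

theorem stmt6 (p : ℕ) (hp : p.Prime) (hp5 : 5 ≤ p)
    (V : Type*) [AddCommGroup V] [Module ℂ V] [FiniteDimensional ℂ V]
    (ρ : Representation ℂ (Matrix.SpecialLinearGroup (Fin 2) (ZMod p)) V)
    (hnontriv : ∃ g : Matrix.SpecialLinearGroup (Fin 2) (ZMod p), ρ g ≠ LinearMap.id) :
    ((p : ℝ) - 1) / 2 ≤ (Module.finrank ℂ V : ℝ) := by
  have : Fact p.Prime := ⟨hp⟩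
  simpa using stmt6_general (by simpa using hp.ne_zero) ρ hnontriv
end

section
/- There exists a constant C ≥ 0 such that for all real X ≥ 3, Σ_{2 ≤ n ≤ X} (Ω(n) − log log X)² ≤ C · X · log log X, where the sum is over integers n with 2 ≤ n ≤ X. -/
/-! Following Turán: two coprime moduli both divide `n` exactly when their product does, so for a
family of pairwise coprime moduli `d i` the divisibilities `d i ∣ n` with `n ≤ N` are nearly
independent, and the number of moduli dividing `n` has variance at most about `∑ i, 1 / d i`.
For the primes up to `N` this sum is `log log N + O(1)`, which follows by partial summation from
Mertens' estimate of `∑ log p / p`, and that in turn from Legendre's formula for `N!`.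
The proper prime powers counted by `Ω` contribute only `O(N)` to the sum of squares, as the second
moment belonging to the `k`-th powers of the primes decays like `N / 2 ^ k`. -/

open Finset Real
open Nat (primesLE)
open scoped ArithmeticFunction.Omega Nat

section DvdCount

variable {ι : Type*}

/-- The number of indices `i ∈ s` whose modulus `d i` divides `n`. If `s` is a set of primes
containing all prime factors of `n`, then `d = (· ^ 1)` gives `ω n`, and the values for the moduli
`d = (· ^ k)` add up to `Ω n` over `k ≥ 1`. -/
def dvdCount (s : Finset ι) (d : ι → ℕ) (n : ℕ) : ℕ :=
  #{i ∈ s | d i ∣ n}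

theorem cast_div_le_natDiv_add_one (n d : ℕ) : (n : ℝ) / d ≤ (n / d : ℕ) + 1 := by
  rw [← Nat.floor_div_eq_div (K := ℝ)]
  exact (Nat.lt_floor_add_one _).le

theorem sum_dvdCount (s : Finset ι) (d : ι → ℕ) (N : ℕ) :
    ∑ n ∈ Ioc 0 N, dvdCount s d n = ∑ i ∈ s, N / d i := by
  simp_rw [← Nat.Ioc_filter_dvd_card_eq_div]
  exact sum_card_bipartiteAbove_eq_sum_card_bipartiteBelow fun n i ↦ d i ∣ n

theorem dvdCount_sq (s : Finset ι) (d : ι → ℕ) (n : ℕ) :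
    dvdCount s d n ^ 2 = dvdCount (s ×ˢ s) (fun x ↦ (d x.1).lcm (d x.2)) n := by
  simp only [dvdCount, sq, Nat.lcm_dvd_iff]
  rw [filter_product (fun i ↦ d i ∣ n) (fun j ↦ d j ∣ n), card_product]

theorem mul_sum_inv_sub_card_le_sum_dvdCount (s : Finset ι) (d : ι → ℕ) (N : ℕ) :
    N * ∑ i ∈ s, (d i : ℝ)⁻¹ - #s ≤ ∑ n ∈ Ioc 0 N, (dvdCount s d n : ℝ) := by
  simp only [mul_sum, ← div_eq_mul_inv]
  rw [sub_le_iff_le_add, ← Nat.cast_sum, sum_dvdCount, Nat.cast_sum, card_eq_sum_ones, Nat.cast_sum,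
    ← sum_add_distrib]
  exact sum_le_sum fun i _ ↦ by simpa using cast_div_le_natDiv_add_one N (d i)

theorem sum_dvdCount_sq_le {s : Finset ι} {d : ι → ℕ}
    (hd : (s : Set ι).Pairwise (Function.onFun Nat.Coprime d)) (N : ℕ) :
    ∑ n ∈ Ioc 0 N, (dvdCount s d n : ℝ) ^ 2 ≤
      N * ((∑ i ∈ s, (d i : ℝ)⁻¹) ^ 2 + ∑ i ∈ s, (d i : ℝ)⁻¹) := by
  classical
  have pair_le : ∀ i ∈ s, ∀ j ∈ s, ((N / (d i).lcm (d j) : ℕ) : ℝ) ≤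
      N * ((d i : ℝ)⁻¹ * (d j : ℝ)⁻¹) + if i = j then N * (d i : ℝ)⁻¹ else 0 := by
    intro i hi j hj
    refine Nat.cast_div_le.trans ?_
    rw [div_eq_mul_inv]
    split_ifs with hij
    · subst hij
      rw [Nat.lcm_self]
      exact le_add_of_nonneg_left (by positivity)
    · rw [(hd hi hj hij).lcm_eq_mul, Nat.cast_mul, mul_inv, add_zero]
  calc ∑ n ∈ Ioc 0 N, (dvdCount s d n : ℝ) ^ 2
      = ∑ i ∈ s, ∑ j ∈ s, ((N / (d i).lcm (d j) : ℕ) : ℝ) := by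
        rw [← sum_product', ← Nat.cast_sum, ← sum_dvdCount]
        simp only [← dvdCount_sq, Nat.cast_sum, Nat.cast_pow]
    _ ≤ ∑ i ∈ s, ∑ j ∈ s, (N * ((d i : ℝ)⁻¹ * (d j : ℝ)⁻¹) +
          if i = j then N * (d i : ℝ)⁻¹ else 0) :=
        sum_le_sum fun i hi ↦ sum_le_sum fun j hj ↦ pair_le i hi j hj
    _ = N * ((∑ i ∈ s, (d i : ℝ)⁻¹) ^ 2 + ∑ i ∈ s, (d i : ℝ)⁻¹) := by
        simp only [sum_add_distrib, sum_ite_eq, ← mul_sum, ← sum_mul, sum_ite_mem, inter_self]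
        ring

theorem sum_dvdCount_sub_sq_le {s : Finset ι} {d : ι → ℕ}
    (hd : (s : Set ι).Pairwise (Function.onFun Nat.Coprime d)) (N : ℕ) {L : ℝ} (hL : 0 ≤ L) :
    ∑ n ∈ Ioc 0 N, ((dvdCount s d n : ℝ) - L) ^ 2 ≤
      N * ((∑ i ∈ s, (d i : ℝ)⁻¹ - L) ^ 2 + ∑ i ∈ s, (d i : ℝ)⁻¹) + 2 * L * #s := by
  have second_moment := sum_dvdCount_sq_le hd N
  have first_moment := mul_le_mul_of_nonneg_left
    (mul_sum_inv_sub_card_le_sum_dvdCount s d N) (mul_nonneg zero_le_two hL)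
  have expand : ∑ n ∈ Ioc 0 N, ((dvdCount s d n : ℝ) - L) ^ 2 =
      ∑ n ∈ Ioc 0 N, (dvdCount s d n : ℝ) ^ 2 - 2 * L * ∑ n ∈ Ioc 0 N, (dvdCount s d n : ℝ) +
        N * L ^ 2 := by
    simp only [sub_sq', mul_sum, sum_sub_distrib, sum_add_distrib, sum_const, Nat.card_Ioc,
      nsmul_eq_mul, tsub_zero, mul_right_comm _ _ L]
    ring
  linarith

end DvdCount

section PrimePowers

theorem cardFactors_eq_sum_dvdCount {n N : ℕ} (hn : n ≠ 0) (hnN : n ≤ N) :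
    Ω n = ∑ k ∈ Ico 1 (N + 1), dvdCount (primesLE N) (· ^ k) n := by
  have subset : n.primeFactors ⊆ primesLE N := fun p hp ↦
    Nat.mem_primesLE.2 ⟨(Nat.le_of_mem_primeFactors hp).trans hnN, Nat.prime_of_mem_primeFactors hp⟩
  have factorization_eq : ∀ p ∈ primesLE N,
      n.factorization p = #{k ∈ Ico 1 (N + 1) | p ^ k ∣ n} := by
    intro p hp
    have hp := Nat.prime_of_mem_primesLE hp
    exact Nat.factorization_eq_card_pow_dvd_of_lt hp (Nat.pos_of_ne_zero hn)
      ((Nat.lt_succ_of_le hnN).trans (Nat.lt_pow_self hp.one_lt))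
  calc Ω n = ∑ p ∈ primesLE N, n.factorization p := by
        rw [ArithmeticFunction.cardFactors_eq_sum_factorization]
        exact Finsupp.sum_of_support_subset _ subset _ fun _ _ ↦ rfl
    _ = ∑ p ∈ primesLE N, #{k ∈ Ico 1 (N + 1) | p ^ k ∣ n} := sum_congr rfl factorization_eq
    _ = ∑ k ∈ Ico 1 (N + 1), dvdCount (primesLE N) (· ^ k) n :=
        sum_card_bipartiteAbove_eq_sum_card_bipartiteBelow fun p k ↦ p ^ k ∣ n

theorem pairwise_coprime_pow_primesLE (N k : ℕ) :
    (primesLE N : Set ℕ).Pairwise (Function.onFun Nat.Coprime (· ^ k)) := fun _ hp _ hq hpq ↦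
  ((Nat.coprime_primes (Nat.prime_of_mem_primesLE hp) (Nat.prime_of_mem_primesLE hq)).2 hpq).pow k k

theorem sum_inv_sq_primesLE_le_one (N : ℕ) : ∑ p ∈ primesLE N, ((p : ℝ) ^ 2)⁻¹ ≤ 1 := by
  calc ∑ p ∈ primesLE N, ((p : ℝ) ^ 2)⁻¹
      ≤ ∑ m ∈ Ioo 1 (N + 1), ((m : ℝ) ^ 2)⁻¹ := by
        refine sum_le_sum_of_subset_of_nonneg (fun p hp ↦ ?_) fun _ _ _ ↦ by positivity
        exact mem_Ioo.2
          ⟨Nat.one_lt_of_mem_primesLE hp, Nat.lt_succ_of_le (Nat.le_of_mem_primesLE hp)⟩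
    _ ≤ 1 := (sum_Ioo_inv_sq_le 1 (N + 1)).trans (by norm_num)

theorem sum_inv_pow_primesLE_le (N : ℕ) {k : ℕ} (hk : 2 ≤ k) :
    ∑ p ∈ primesLE N, ((p : ℝ) ^ k)⁻¹ ≤ (1 / 2) ^ (k - 2) := by
  have term_le : ∀ p ∈ primesLE N, ((p : ℝ) ^ k)⁻¹ ≤ (1 / 2) ^ (k - 2) * ((p : ℝ) ^ 2)⁻¹ := by
    intro p hp
    have two_le : (2 : ℝ) ≤ p := mod_cast Nat.two_le_of_mem_primesLE hp
    rw [← Nat.sub_add_cancel hk, pow_add, mul_inv, Nat.add_sub_cancel, one_div_pow, one_div]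
    gcongr
  calc ∑ p ∈ primesLE N, ((p : ℝ) ^ k)⁻¹
      ≤ (1 / 2) ^ (k - 2) * ∑ p ∈ primesLE N, ((p : ℝ) ^ 2)⁻¹ := by
        rw [mul_sum]
        exact sum_le_sum term_le
    _ ≤ (1 / 2) ^ (k - 2) :=
        mul_le_of_le_one_right (by positivity) (sum_inv_sq_primesLE_le_one N)

theorem sum_dvdCount_pow_sq_le (P N : ℕ) {k : ℕ} (hk : 2 ≤ k) :
    ∑ n ∈ Ioc 0 N, (dvdCount (primesLE P) (· ^ k) n : ℝ) ^ 2 ≤ 8 * N * (1 / 2) ^ k := by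
  set A : ℝ := ∑ p ∈ primesLE P, ((p : ℝ) ^ k)⁻¹
  have hA : A ≤ (1 / 2) ^ (k - 2) := sum_inv_pow_primesLE_le P hk
  have hA0 : 0 ≤ A := sum_nonneg fun _ _ ↦ by positivity
  have hA1 : A ≤ 1 := hA.trans (pow_le_one₀ (by norm_num) (by norm_num))
  calc ∑ n ∈ Ioc 0 N, (dvdCount (primesLE P) (· ^ k) n : ℝ) ^ 2
      ≤ N * (A ^ 2 + A) := by
        simpa only [Nat.cast_pow] using sum_dvdCount_sq_le (pairwise_coprime_pow_primesLE P k) N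
    _ ≤ N * (2 * (1 / 2) ^ (k - 2)) := by
        gcongr
        nlinarith
    _ = 8 * N * (1 / 2) ^ k := by
        rw [← Nat.sub_add_cancel hk, pow_add, Nat.add_sub_cancel]
        ring

/- Cauchy–Schwarz with the weights `(3 / 4) ^ k`: they are summable, and their inverses grow more
slowly than the decay `(1 / 2) ^ k` of the second moments. -/
theorem sum_sq_sum_dvdCount_pow_le (P N M : ℕ) :
    ∑ n ∈ Ioc 0 N, (∑ k ∈ Ico 2 M, (dvdCount (primesLE P) (· ^ k) n : ℝ)) ^ 2 ≤ 24 * N := by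
  have cauchy_schwarz (n : ℕ) :
      (∑ k ∈ Ico 2 M, (dvdCount (primesLE P) (· ^ k) n : ℝ)) ^ 2 ≤
        9 / 4 * ∑ k ∈ Ico 2 M, (4 / 3 : ℝ) ^ k * (dvdCount (primesLE P) (· ^ k) n : ℝ) ^ 2 := by
    refine (sum_sq_le_sum_mul_sum_of_sq_le_mul _ (f := fun k ↦ (3 / 4 : ℝ) ^ k)
      (g := fun k ↦ (4 / 3 : ℝ) ^ k * (dvdCount (primesLE P) (· ^ k) n : ℝ) ^ 2)
      (fun _ _ ↦ by positivity) (fun _ _ ↦ by positivity) fun k _ ↦ ?_).trans ?_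
    · rw [← mul_assoc, ← mul_pow]
      norm_num
    · gcongr
      exact (geom_sum_Ico_le_of_lt_one (by norm_num) (by norm_num)).trans (by norm_num)
  calc ∑ n ∈ Ioc 0 N, (∑ k ∈ Ico 2 M, (dvdCount (primesLE P) (· ^ k) n : ℝ)) ^ 2
      ≤ 9 / 4 * ∑ k ∈ Ico 2 M, (4 / 3) ^ k *
          ∑ n ∈ Ioc 0 N, (dvdCount (primesLE P) (· ^ k) n : ℝ) ^ 2 := by
        refine (sum_le_sum fun n _ ↦ cauchy_schwarz n).trans_eq ?_
        rw [← mul_sum, sum_comm]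
        simp only [mul_sum]
    _ ≤ 9 / 4 * ∑ k ∈ Ico 2 M, (4 / 3 : ℝ) ^ k * (8 * N * (1 / 2) ^ k) := by
        gcongr with k hk
        exact sum_dvdCount_pow_sq_le P N (mem_Ico.1 hk).1
    _ = 18 * N * ∑ k ∈ Ico 2 M, (2 / 3 : ℝ) ^ k := by
        rw [mul_sum, mul_sum]
        refine sum_congr rfl fun k _ ↦ ?_
        rw [show (2 / 3 : ℝ) = 4 / 3 * (1 / 2) by norm_num, mul_pow]
        ring
    _ ≤ 18 * N * (4 / 3) := by
        gcongr
        exact (geom_sum_Ico_le_of_lt_one (by norm_num) (by norm_num)).trans (by norm_num)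
    _ = 24 * N := by ring

theorem sum_cardFactors_sub_sq_le (N : ℕ) {L : ℝ} (hL : 0 ≤ L) :
    ∑ n ∈ Ioc 0 N, ((Ω n : ℝ) - L) ^ 2 ≤
      2 * N * ((∑ p ∈ primesLE N, (p : ℝ)⁻¹ - L) ^ 2 + ∑ p ∈ primesLE N, (p : ℝ)⁻¹ +
        2 * L + 24) := by
  have split : ∀ n ∈ Ioc 0 N, ((Ω n : ℝ) - L) ^ 2 ≤
      2 * (((dvdCount (primesLE N) (· ^ 1) n : ℝ) - L) ^ 2 +
        (∑ k ∈ Ico 2 (N + 1), (dvdCount (primesLE N) (· ^ k) n : ℝ)) ^ 2) := by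
    intro n hn
    obtain ⟨hn0, hnN⟩ := mem_Ioc.1 hn
    rw [cardFactors_eq_sum_dvdCount hn0.ne' hnN, Nat.cast_sum,
      sum_eq_sum_Ico_succ_bot (by lia), add_sub_right_comm]
    exact add_sq_le
  have card_le : (#(primesLE N) : ℝ) ≤ N := by
    rw [Nat.primesLE_eq_filter_Ioc_zero]
    exact mod_cast (card_filter_le _ _).trans_eq (Nat.card_Ioc 0 N)
  have turan := sum_dvdCount_sub_sq_le (pairwise_coprime_pow_primesLE N 1) N hL
  simp only [Nat.cast_pow, pow_one (_ : ℝ)] at turan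
  calc ∑ n ∈ Ioc 0 N, ((Ω n : ℝ) - L) ^ 2
      ≤ 2 * (∑ n ∈ Ioc 0 N, ((dvdCount (primesLE N) (· ^ 1) n : ℝ) - L) ^ 2 +
          ∑ n ∈ Ioc 0 N, (∑ k ∈ Ico 2 (N + 1), (dvdCount (primesLE N) (· ^ k) n : ℝ)) ^ 2) := by
        rw [← sum_add_distrib, mul_sum]
        exact sum_le_sum split
    _ ≤ 2 * (N * ((∑ p ∈ primesLE N, (p : ℝ)⁻¹ - L) ^ 2 + ∑ p ∈ primesLE N, (p : ℝ)⁻¹) +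
          2 * L * N + 24 * N) := by
        gcongr
        · exact turan.trans (by gcongr)
        · exact sum_sq_sum_dvdCount_pow_le N N (N + 1)
    _ = _ := by ring

end PrimePowers

section PartialSummation

/- The increment of `log` lies between `1 - x / y` and `y / x - 1`, and these two differ by
`(y - x) * (1 / x - 1 / y)`. -/
theorem abs_mul_sub_inv_sub_log_sub_log_le {a x y B K : ℝ} (hx : 0 < x) (hxy : x ≤ y)
    (hB : y ≤ x + B) (ha : |a - x| ≤ K) :
    |a * (x⁻¹ - y⁻¹) - (log y - log x)| ≤ (K + B) * (x⁻¹ - y⁻¹) := by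
  have hy : 0 < y := hx.trans_le hxy
  have inv_sub_nonneg : 0 ≤ x⁻¹ - y⁻¹ := sub_nonneg.2 (inv_anti₀ hx hxy)
  have a_error : |(a - x) * (x⁻¹ - y⁻¹)| ≤ K * (x⁻¹ - y⁻¹) := by
    rw [abs_mul, abs_of_nonneg inv_sub_nonneg]
    gcongr
  have log_lower : x * (x⁻¹ - y⁻¹) ≤ log y - log x := by
    rw [← log_div hy.ne' hx.ne', mul_sub, mul_inv_cancel₀ hx.ne', ← div_eq_mul_inv, ← inv_div y x]
    exact one_sub_inv_le_log_of_pos (div_pos hy hx)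
  have log_upper : log y - log x ≤ (x + B) * (x⁻¹ - y⁻¹) :=
    calc log y - log x ≤ y / x - 1 := by
          rw [← log_div hy.ne' hx.ne']
          exact log_le_sub_one_of_pos (div_pos hy hx)
      _ = y * (x⁻¹ - y⁻¹) := by field_simp
      _ ≤ (x + B) * (x⁻¹ - y⁻¹) := by gcongr
  rw [abs_le] at a_error ⊢
  constructor <;> linarith

theorem abs_sum_div_sub_log_le {c f : ℕ → ℝ} {m n : ℕ} {B K : ℝ} (hfm : 0 < f m)
    (hf : MonotoneOn f (Set.Ici m)) (hB : ∀ k ≥ m, f (k + 1) ≤ f k + B)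
    (hK : ∀ k ≥ m, |∑ i ∈ Icc m k, c i - f k| ≤ K) (hn : m ≤ n) :
    |∑ i ∈ Icc m n, c i / f i - log (f n)| ≤ 1 + (2 * K + B) / f m + |log (f m)| := by
  set A : ℕ → ℝ := fun k ↦ ∑ i ∈ Icc m k, c i
  set T : ℕ → ℝ := fun k ↦ ∑ i ∈ Icc m k, c i / f i - A k / f k
  have f_le {k : ℕ} (hk : m ≤ k) : f m ≤ f k := hf Set.self_mem_Ici hk hk
  have f_pos {k : ℕ} (hk : m ≤ k) : 0 < f k := hfm.trans_le (f_le hk)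
  have K_nonneg : 0 ≤ K := (abs_nonneg _).trans (hK m le_rfl)
  have B_nonneg : 0 ≤ B := by linarith [hB m le_rfl, f_le m.le_succ]
  have T_start : T m = 0 := by simp [T, A]
  have T_succ {k : ℕ} (hk : m ≤ k) : T (k + 1) - T k = A k * ((f k)⁻¹ - (f (k + 1))⁻¹) := by
    simp only [T, A, sum_Icc_succ_top (hk.trans k.le_succ)]
    ring
  have telescoped : dist (T m - log (f m)) (T n - log (f n)) ≤ (K + B) / f m :=
    calc dist (T m - log (f m)) (T n - log (f n))
        ≤ ∑ k ∈ Ico m n, (K + B) * ((f k)⁻¹ - (f (k + 1))⁻¹) := by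
          refine dist_le_Ico_sum_of_dist_le (f := fun k ↦ T k - log (f k)) hn fun {k} hk _ ↦ ?_
          rw [dist_comm, Real.dist_eq, sub_sub_sub_comm, T_succ hk]
          exact abs_mul_sub_inv_sub_log_sub_log_le (f_pos hk)
            (hf hk (hk.trans k.le_succ) k.le_succ) (hB k hk) (hK k hk)
      _ = (K + B) * ((f m)⁻¹ - (f n)⁻¹) := by
          rw [← mul_sum, ← neg_sub_neg, ← sum_Ico_sub (fun k ↦ -(f k)⁻¹) hn]
          simp only [neg_sub_neg]
      _ ≤ (K + B) / f m := by
          rw [div_eq_mul_inv]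
          gcongr
          exact sub_le_self _ (inv_nonneg.2 (f_pos hn).le)
  have boundary : |A n / f n - 1| ≤ K / f m := by
    rw [div_sub_one (f_pos hn).ne', abs_div, abs_of_pos (f_pos hn)]
    exact div_le_div₀ K_nonneg (hK n hn) hfm (f_le hn)
  have log_start := abs_le.1 (le_refl |log (f m)|)
  rw [T_start, zero_sub, dist_comm, Real.dist_eq, abs_le] at telescoped
  rw [abs_le] at boundary ⊢
  have : (2 * K + B) / f m = (K + B) / f m + K / f m := by ring
  simp only [T] at telescoped
  constructor <;> linarith

end PartialSummation

section Mertens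

theorem log_factorial_eq_sum (N : ℕ) :
    log N ! = ∑ p ∈ primesLE N, (N !).factorization p * log p := by
  rw [log_nat_eq_sum_factorization]
  refine Finsupp.sum_of_support_subset _ (fun p hp ↦ ?_) _ fun _ _ ↦ by simp
  have hp := Nat.support_factorization _ ▸ hp
  have hprime := Nat.prime_of_mem_primeFactors hp
  exact Nat.mem_primesLE.2 ⟨hprime.dvd_factorial.1 (Nat.dvd_of_mem_primeFactors hp), hprime⟩

theorem log_factorial_le_mul_log (N : ℕ) : log N ! ≤ N * log N := by
  rw [← log_pow]
  exact log_le_log (by positivity) (mod_cast N.factorial_le_pow)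

theorem mul_log_sub_le_log_factorial (N : ℕ) : N * log N - N ≤ log N ! := by
  rcases eq_or_ne N 0 with rfl | hN
  · simp
  have stirling := Stirling.le_log_factorial_stirling hN
  have := log_natCast_nonneg N
  have : 0 ≤ log (2 * π) := log_nonneg (by linarith [pi_gt_three])
  linarith

theorem div_le_factorization_factorial {p : ℕ} (hp : p.Prime) (N : ℕ) :
    N / p ≤ (N !).factorization p := by
  rw [Nat.factorization_factorial hp (show Nat.log p N < Nat.log p N + 2 by lia)]
  have one_mem : 1 ∈ Ico 1 (Nat.log p N + 2) := mem_Ico.2 ⟨le_rfl, by lia⟩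
  simpa only [pow_one] using
    single_le_sum (f := fun i ↦ N / p ^ i) (fun _ _ ↦ Nat.zero_le _) one_mem

theorem mul_sum_log_div_sub_le_log_factorial (N : ℕ) :
    N * ∑ p ∈ primesLE N, log p / p - log 4 * N ≤ log N ! := by
  have term_le : ∀ p ∈ primesLE N, N * (log p / p) ≤ (N !).factorization p * log p + log p := by
    intro p hp
    have floor_le : (N : ℝ) / p ≤ (N !).factorization p + 1 :=
      calc (N : ℝ) / p ≤ (N / p : ℕ) + 1 := cast_div_le_natDiv_add_one N p
        _ ≤ (N !).factorization p + 1 := by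
            gcongr
            exact div_le_factorization_factorial (Nat.prime_of_mem_primesLE hp) N
    calc N * (log p / p) = N / p * log p := by ring
      _ ≤ ((N !).factorization p + 1) * log p := by
          gcongr
      _ = (N !).factorization p * log p + log p := by ring
  have chebyshev : ∑ p ∈ primesLE N, log p ≤ log 4 * N :=
    Chebyshev.theta_eq_sum_primesLE_log N ▸ Chebyshev.theta_le_log4_mul_x N.cast_nonneg
  have := sum_le_sum term_le
  rw [← mul_sum, sum_add_distrib, ← log_factorial_eq_sum] at this
  linarith

/- Since `log m - log (m - 1) ≤ 1 / (m - 1)`, the sequence `(log m + 2) / m` decreases at least as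
fast as the partial sums grow. -/
theorem sum_log_div_mul_sub_one_le {N : ℕ} (hN : 1 ≤ N) :
    ∑ m ∈ Ioc 1 N, log m / (m * (m - 1)) ≤ 2 - (log N + 2) / N := by
  induction N, hN using Nat.le_induction with
  | base => simp
  | succ N hN ih =>
    have hN0 : (1 : ℝ) ≤ N := mod_cast hN
    have log_increment : (N + 1) * (log (N + 1) - log N) ≤ 2 :=
      calc (N + 1) * (log (N + 1) - log N) ≤ (N + 1) * ((N + 1) / N - 1) := by
            rw [← log_div (by positivity) (by positivity)]
            gcongr
            exact log_le_sub_one_of_pos (by positivity)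
        _ = 1 + 1 / N := by field_simp; ring
        _ ≤ 2 := by linarith [div_le_one_of_le₀ hN0 (by positivity)]
    have step : 2 - (log (N + 1) + 2) / (N + 1) -
        (2 - (log N + 2) / N + log (N + 1) / ((N + 1) * (N + 1 - 1))) =
          (2 - (N + 1) * (log (N + 1) - log N)) / (N * (N + 1)) := by
      rw [add_sub_cancel_right]
      field_simp
      ring
    have step_nonneg : 0 ≤ (2 - (N + 1) * (log (N + 1) - log N)) / (N * (N + 1)) :=
      div_nonneg (sub_nonneg.2 log_increment) (by positivity)
    rw [sum_Ioc_succ_top hN, Nat.cast_succ]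
    linarith

theorem log_factorial_le_mul_sum_log_div (N : ℕ) :
    log N ! ≤ N * (∑ p ∈ primesLE N, log p / p + 2) := by
  rcases Nat.eq_zero_or_pos N with rfl | hN
  · simp
  have term_le : ∀ p ∈ primesLE N, (N !).factorization p * log p ≤
      N * (log p / p + log p / (p * (p - 1))) := by
    intro p hp
    have one_lt : (1 : ℝ) < p := mod_cast Nat.one_lt_of_mem_primesLE hp
    have sub_pos : (0 : ℝ) < p - 1 := sub_pos.2 one_lt
    calc (N !).factorization p * log p ≤ N / (p - 1) * log p := by
          gcongr
          rw [← Nat.cast_pred (by exact_mod_cast one_pos.trans one_lt)]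
          exact (Nat.cast_le.2 (Nat.factorization_factorial_le_div_pred
            (Nat.prime_of_mem_primesLE hp) N)).trans Nat.cast_div_le
      _ = N * (log p / p + log p / (p * (p - 1))) := by
          field_simp
          ring
  have prime_powers_le : ∑ p ∈ primesLE N, log p / (p * (p - 1)) ≤ 2 :=
    calc ∑ p ∈ primesLE N, log p / (p * (p - 1))
        ≤ ∑ m ∈ Ioc 1 N, log m / (m * (m - 1)) := by
          rw [Nat.primesLE_eq_filter_Ioc_one]
          refine sum_le_sum_of_subset_of_nonneg (filter_subset _ _) fun m hm _ ↦ ?_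
          have : (1 : ℝ) < m := mod_cast (mem_Ioc.1 hm).1
          have := sub_pos.2 this
          positivity
      _ ≤ 2 := (sum_log_div_mul_sub_one_le hN).trans (sub_le_self _ (by positivity))
  rw [log_factorial_eq_sum]
  refine (sum_le_sum term_le).trans ?_
  rw [← mul_sum, sum_add_distrib]
  gcongr

theorem abs_sum_log_div_sub_log_le {N : ℕ} (hN : N ≠ 0) :
    |∑ p ∈ primesLE N, log p / p - log N| ≤ 3 := by
  have hN0 : (0 : ℝ) < N := by positivity
  have log_four : log 4 ≤ 3 := (log_le_sub_one_of_pos (by norm_num)).trans (by norm_num)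
  have lower := (mul_log_sub_le_log_factorial N).trans (log_factorial_le_mul_sum_log_div N)
  have upper := (mul_sum_log_div_sub_le_log_factorial N).trans (log_factorial_le_mul_log N)
  rw [abs_le]
  constructor <;> refine le_of_mul_le_mul_left ?_ hN0 <;> nlinarith

theorem abs_sum_inv_sub_log_log_le {N : ℕ} (hN : 2 ≤ N) :
    |∑ p ∈ primesLE N, (p : ℝ)⁻¹ - log (log N)| ≤ 12 := by
  set c : ℕ → ℝ := fun k ↦ if k.Prime then log k / k else 0
  have sum_c (k : ℕ) : ∑ i ∈ Icc 2 k, c i = ∑ p ∈ primesLE k, log p / p := by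
    rw [Nat.primesLE_eq_filter_Icc_two, sum_filter]
  have sum_c_div_log : ∑ i ∈ Icc 2 N, c i / log i = ∑ p ∈ primesLE N, (p : ℝ)⁻¹ := by
    rw [Nat.primesLE_eq_filter_Icc_two, sum_filter]
    refine sum_congr rfl fun k hk ↦ ?_
    have log_ne_zero : log k ≠ 0 := (log_pos (mod_cast (mem_Icc.1 hk).1)).ne'
    simp only [c, ite_div, zero_div]
    congr 1
    rw [div_right_comm, div_self log_ne_zero, one_div]
  have log_mono : MonotoneOn (fun k : ℕ ↦ log k) (Set.Ici 2) := fun k hk l _ hkl ↦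
    log_le_log (mod_cast zero_lt_two.trans_le hk) (mod_cast hkl)
  have log_succ_le : ∀ k ≥ 2, log (k + 1 : ℕ) ≤ log k + 1 := by
    intro k hk
    have hk : (2 : ℝ) ≤ k := mod_cast hk
    rw [Nat.cast_succ, ← sub_le_iff_le_add', ← log_div (by positivity) (by positivity)]
    refine (log_le_sub_one_of_pos (by positivity)).trans ?_
    rw [sub_le_iff_le_add, div_le_iff₀ (by positivity)]
    linarith
  have log_two_pos : 0 < log 2 := log_pos one_lt_two
  have abs_log_log_two : |log (log 2)| ≤ (log 2)⁻¹ - 1 := by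
    rw [abs_of_nonpos (log_nonpos log_two_pos.le (by linarith [log_two_lt_d9]))]
    linarith [one_sub_inv_le_log_of_pos log_two_pos]
  have log_two_inv : (log 2)⁻¹ ≤ 3 / 2 :=
    inv_le_of_inv_le₀ (by norm_num) (by linarith [log_two_gt_d9])
  have main := abs_sum_div_sub_log_le (c := c) (K := 3) log_two_pos log_mono log_succ_le
    (fun k hk ↦ by rw [sum_c]; exact abs_sum_log_div_sub_log_le (by lia)) hN
  rw [sum_c_div_log, div_eq_mul_inv] at main
  linarith

theorem abs_sum_inv_floor_sub_log_log_le {X : ℝ} (hX : 2 ≤ X) :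
    |∑ p ∈ primesLE ⌊X⌋₊, (p : ℝ)⁻¹ - log (log X)| ≤ 13 := by
  have two_le_floor : 2 ≤ ⌊X⌋₊ := Nat.le_floor hX
  have two_le_floor' : (2 : ℝ) ≤ ⌊X⌋₊ := mod_cast two_le_floor
  have floor_le : (⌊X⌋₊ : ℝ) ≤ X := Nat.floor_le (by linarith)
  have log_floor_pos : 0 < log ⌊X⌋₊ := log_pos (by linarith)
  have log_le : log X ≤ 2 * log ⌊X⌋₊ := by
    rw [← log_rpow (by linarith), rpow_two]
    exact log_le_log (by linarith) (by nlinarith [Nat.lt_floor_add_one X])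
  have log_log_mono : log (log ⌊X⌋₊) ≤ log (log X) :=
    log_le_log log_floor_pos (log_le_log (by linarith) floor_le)
  have log_log_le : log (log X) ≤ 1 + log (log ⌊X⌋₊) :=
    calc log (log X) ≤ log (2 * log ⌊X⌋₊) :=
          log_le_log (log_floor_pos.trans_le (log_le_log (by linarith) floor_le)) log_le
      _ = log 2 + log (log ⌊X⌋₊) := log_mul two_ne_zero log_floor_pos.ne'
      _ ≤ 1 + log (log ⌊X⌋₊) := by linarith [log_two_lt_d9]
  have mertens := abs_le.1 (abs_sum_inv_sub_log_log_le two_le_floor)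
  rw [abs_le]
  constructor <;> linarith

end Mertens

theorem stmt19 :
    ∃ C : ℝ, 0 ≤ C ∧ ∀ X : ℝ, 3 ≤ X →
      ∑ n ∈ Finset.Icc 2 ⌊X⌋₊,
          ((ArithmeticFunction.cardFactors n : ℝ) - Real.log (Real.log X)) ^ 2 ≤
        C * X * Real.log (Real.log X) := by
  have one_lt_log_three : 1 < log 3 :=
    (lt_log_iff_exp_lt (by norm_num)).2 (by linarith [exp_one_lt_d9])
  have log_log_three_pos : 0 < log (log 3) := log_pos one_lt_log_three
  refine ⟨6 + 412 / log (log 3), by positivity, fun X hX ↦ ?_⟩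
  set L := log (log X)
  set A := ∑ p ∈ primesLE ⌊X⌋₊, (p : ℝ)⁻¹
  have log_log_three_le : log (log 3) ≤ L :=
    log_le_log (by linarith) (log_le_log (by norm_num) hX)
  have L_pos : 0 < L := log_log_three_pos.trans_le log_log_three_le
  obtain ⟨A_ge, A_le⟩ : -13 ≤ A - L ∧ A - L ≤ 13 :=
    abs_le.1 (abs_sum_inv_floor_sub_log_log_le (by linarith))
  calc ∑ n ∈ Icc 2 ⌊X⌋₊, ((Ω n : ℝ) - L) ^ 2
      ≤ ∑ n ∈ Ioc 0 ⌊X⌋₊, ((Ω n : ℝ) - L) ^ 2 :=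
        sum_le_sum_of_subset_of_nonneg (by grind) fun _ _ _ ↦ sq_nonneg _
    _ ≤ 2 * ⌊X⌋₊ * ((A - L) ^ 2 + A + 2 * L + 24) := sum_cardFactors_sub_sq_le _ L_pos.le
    _ ≤ 2 * X * (3 * L + 206 * (L / log (log 3))) := by
        gcongr 2 * ?_ * ?_
        · exact Nat.floor_le (by linarith)
        · linarith [sq_le_sq' A_ge A_le, (one_le_div log_log_three_pos).2 log_log_three_le]
    _ = (6 + 412 / log (log 3)) * X * L := by ring
end
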